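/- arXiv:1601.08166 — 9 statements merged into one kernel-verified Lean document; each statement's English description precedes it below -/
import Mathlib

section
/- Let (a_k), (b_k), (ε_k) be real sequences such that (a_k) is bounded from below, (b_k) is nonnegative, (ε_k) is summable (belongs to ℓ¹), and a_{k+1} − a_k + b_k ≤ ε_k for every k ≥ 0. Then (a_k) is convergent and (b_k) is summable. -/
/-!
The sequence `d k = ε k - (a (k + 1) - a k)` dominates `b k`, so it is nonnegative; its partial sums
telescope to `∑ ε - a n + a 0`, which is bounded above since `a` is bounded below. Hence `d` is
summable. Comparison with `d` gives the summability of `b`, and `ε - d` is the sequence of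
increments of `a`, which is therefore summable, so that `a` converges by telescoping.
-/

open Filter Topology Classical

/-- Quasi-Fejér lemma: if `(a k)` is bounded below, `(b k)` is nonnegative, `(ε k)` is
absolutely summable and `a (k+1) - a k + b k ≤ ε k` for all `k`, then `(a k)` converges and
`(b k)` is summable. -/
theorem fejer_real_sequences
    (a b ε : ℕ → ℝ)
    (ha_bdd : ∃ m : ℝ, ∀ k : ℕ, m ≤ a k)
    (hb_nonneg : ∀ k : ℕ, 0 ≤ b k)
    (hε : Summable fun k => |ε k|)
    (hrec : ∀ k : ℕ, a (k + 1) - a k + b k ≤ ε k) :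
    (∃ l : ℝ, Tendsto a atTop (𝓝 l)) ∧ Summable b := by
  obtain ⟨m, hm⟩ := ha_bdd
  have hd : Summable fun k => ε k - (a (k + 1) - a k) := by
    refine summable_of_sum_range_le (c := (∑' k, |ε k|) - m + a 0)
      (fun k => by linarith [hrec k, hb_nonneg k]) fun n => ?_
    have h1 : ∑ i ∈ Finset.range n, ε i ≤ ∑ i ∈ Finset.range n, |ε i| :=
      Finset.sum_le_sum fun i _ => le_abs_self (ε i)
    have h2 := hε.sum_le_tsum (Finset.range n) fun i _ => abs_nonneg (ε i)
    rw [Finset.sum_sub_distrib, Finset.sum_range_sub]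
    linarith [hm n]
  refine ⟨?_, hd.of_nonneg_of_le hb_nonneg fun k => by linarith [hrec k]⟩
  have hΔ : Summable fun k => a (k + 1) - a k := by
    simpa using hε.of_abs.sub hd
  refine ⟨(∑' k, (a (k + 1) - a k)) + a 0, ?_⟩
  simpa only [Finset.sum_range_sub, sub_add_cancel] using hΔ.hasSum.tendsto_sum_nat.add_const (a 0)
end

section
/- In the setting of the concave-denominator fractional program and Algorithm 1, for every x ∈ S and every k ≥ 1 the inequality f(x) − θ_k g(x) ≥ (θ_{k+1} − θ_k) g(x^k) + (L θ_k / 2)‖x^k − x^{k−1}‖² + L θ_k ‖x − x^k‖² − L θ_k ‖x − x^{k−1}‖² holds. -/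
/-!
Since `1 / (2 η) = L θ`, the new iterate minimizes over `S` the function `f + L θ ‖· - p‖²`,
where `p = u + (2L)⁻¹ ∇g(u)` and `u` is the previous iterate. This objective is strongly convex,
so at any `y` it exceeds its minimum by at least `L θ ‖y - u⁺‖²` (`quadratic_growth_of_isMin`).
Expanding the squares turns this into a three-point inequality containing `θ ⟪∇g(u), y - u⁺⟫`.
That inner product is `⟪∇g(u), y - u⟫ - ⟪∇g(u), u⁺ - u⟫`; its first part is bounded below by the
gradient inequality for the concave `g` (`concave_gradient_ineq`), its second part by the descent
lemma for the `L`-Lipschitz gradient (`descent_lemma`), which costs `(L θ / 2) ‖u⁺ - u‖²`.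
Finally `f(u⁺) = θ⁺ g(u⁺)`. When `θ = 0` the proximal term disappears and the claim is just
minimality of `f(u⁺)`.
-/

open Filter Topology Classical

section Helpers

variable {H : Type*} [NormedAddCommGroup H] [InnerProductSpace ℝ H]

theorem norm_sq_segment (u y p : H) (t : ℝ) :
    ‖((1 - t) • u + t • y) - p‖ ^ 2 =
      (1 - t) * ‖u - p‖ ^ 2 + t * ‖y - p‖ ^ 2 - t * (1 - t) * ‖y - u‖ ^ 2 := by
  have e1 : ((1 - t) • u + t • y) - p = (1 - t) • (u - p) + t • (y - p) := by module
  have e2 : y - u = (y - p) - (u - p) := by abel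
  rw [e1, e2, norm_add_sq_real, norm_sub_sq_real (y - p), norm_smul, norm_smul, mul_pow, mul_pow,
    Real.norm_eq_abs, Real.norm_eq_abs, sq_abs, sq_abs, real_inner_smul_left,
    real_inner_smul_right, real_inner_comm (u - p) (y - p)]
  ring

/-- Quadratic growth of a proximal objective away from its minimizer: compare `u` with the points
`(1 - t) u + t y` and let `t → 0⁺`. -/
theorem quadratic_growth_of_isMin {S D : Set H} {f : H → ℝ} (hS : Convex ℝ S)
    (hf : ConvexOn ℝ D f) {c : ℝ} {u p : H} (hu : u ∈ S ∩ D)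
    (hmin : ∀ y ∈ S ∩ D, f u + c * ‖u - p‖ ^ 2 ≤ f y + c * ‖y - p‖ ^ 2)
    {y : H} (hy : y ∈ S ∩ D) :
    f u + c * ‖u - p‖ ^ 2 + c * ‖y - u‖ ^ 2 ≤ f y + c * ‖y - p‖ ^ 2 := by
  have key : ∀ t ∈ Set.Ioo (0 : ℝ) 1,
      f u + c * ‖u - p‖ ^ 2 + (1 - t) * (c * ‖y - u‖ ^ 2) ≤ f y + c * ‖y - p‖ ^ 2 := by
    rintro t ⟨ht0, ht1⟩
    have h1t : 0 ≤ 1 - t := by linarith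
    have hsum : (1 - t) + t = 1 := by ring
    have h1 := hmin ((1 - t) • u + t • y)
      ⟨hS hu.1 hy.1 h1t ht0.le hsum, hf.1 hu.2 hy.2 h1t ht0.le hsum⟩
    have h2 := hf.2 hu.2 hy.2 h1t ht0.le hsum
    rw [norm_sq_segment] at h1
    simp only [smul_eq_mul] at h2
    refine le_of_mul_le_mul_left ?_ ht0
    linarith
  have hlim : Tendsto (fun t : ℝ => f u + c * ‖u - p‖ ^ 2 + (1 - t) * (c * ‖y - u‖ ^ 2))
      (𝓝[>] 0) (𝓝 (f u + c * ‖u - p‖ ^ 2 + c * ‖y - u‖ ^ 2)) := by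
    have hc : Continuous
        (fun t : ℝ => f u + c * ‖u - p‖ ^ 2 + (1 - t) * (c * ‖y - u‖ ^ 2)) := by fun_prop
    have h := hc.tendsto 0
    simp only [sub_zero, one_mul] at h
    exact h.mono_left nhdsWithin_le_nhds
  exact le_of_tendsto hlim
    (Filter.eventually_of_mem (Ioo_mem_nhdsGT one_pos) key)

variable [CompleteSpace H]

theorem hasDerivAt_along_line {g : H → ℝ} {g' : H → H} (hg : ∀ z, HasGradientAt g (g' z) z)
    (u d : H) (t : ℝ) :
    HasDerivAt (fun s : ℝ => g (u + s • d)) (inner ℝ (g' (u + t • d)) d) t := by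
  have h1 : HasDerivAt (fun s : ℝ => u + s • d) d t := by
    simpa using ((hasDerivAt_id t).smul_const d).const_add u
  have h2 := (hg (u + t • d)).hasFDerivAt.comp_hasDerivAt t h1
  rw [InnerProductSpace.toDual_apply_apply] at h2
  exact h2

theorem concave_gradient_ineq {g : H → ℝ} {g' : H → H} (hg : ∀ z, HasGradientAt g (g' z) z)
    (hc : ConcaveOn ℝ Set.univ g) (u y : H) :
    g y ≤ g u + inner ℝ (g' u) (y - u) := by
  have hcl : ConcaveOn ℝ Set.univ (fun s : ℝ => g (u + s • (y - u))) := by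
    refine ⟨convex_univ, fun a _ b _ α β hα hβ hαβ => ?_⟩
    have h := hc.2 (Set.mem_univ (u + a • (y - u))) (Set.mem_univ (u + b • (y - u))) hα hβ hαβ
    have e : α • (u + a • (y - u)) + β • (u + b • (y - u)) =
        u + (α • a + β • b) • (y - u) := by
      obtain rfl : α = 1 - β := by linarith
      simp only [smul_eq_mul]
      module
    rwa [e] at h
  have hd := hasDerivAt_along_line hg u (y - u) 0
  have h := hcl.slope_le_of_hasDerivAt (Set.mem_univ 0) (Set.mem_univ 1) one_pos hd
  simp [slope_def_field] at h
  linarith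

/-- Lower half of the descent lemma: along the segment the function
`t ↦ g(u + t d) - t ⟪∇g(u), d⟫ + (L / 2) t² ‖d‖²` has nonnegative derivative for `t ≥ 0`. -/
theorem descent_lemma {g : H → ℝ} {g' : H → H} (hg : ∀ z, HasGradientAt g (g' z) z)
    {L : ℝ} (hL : 0 < L) (hlip : LipschitzWith (Real.toNNReal L) g') (u y : H) :
    g u + inner ℝ (g' u) (y - u) - L / 2 * ‖y - u‖ ^ 2 ≤ g y := by
  set d := y - u with hd
  have hder : ∀ t : ℝ, HasDerivAt
      (fun s : ℝ => g (u + s • d) - s * inner ℝ (g' u) d + L / 2 * ‖d‖ ^ 2 * s ^ 2)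
      (inner ℝ (g' (u + t • d)) d - inner ℝ (g' u) d + L * t * ‖d‖ ^ 2) t := by
    intro t
    have h := ((hasDerivAt_along_line hg u d t).sub
      ((hasDerivAt_id t).mul_const (inner ℝ (g' u) d))).add
      ((hasDerivAt_pow 2 t).const_mul (L / 2 * ‖d‖ ^ 2))
    refine h.congr_deriv ?_
    norm_num
    ring
  have hmono := monotoneOn_of_deriv_nonneg (convex_Icc (0 : ℝ) 1)
    (fun t _ => (hder t).continuousAt.continuousWithinAt)
    (fun t _ => (hder t).differentiableAt.differentiableWithinAt)
    (fun t ht => by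
      rw [(hder t).deriv]
      have ht0 : 0 < t := by
        rw [interior_Icc] at ht
        exact ht.1
      have h1 : ‖g' (u + t • d) - g' u‖ ≤ L * (t * ‖d‖) := by
        have h := hlip.dist_le_mul (u + t • d) u
        rwa [dist_eq_norm, dist_eq_norm, add_sub_cancel_left, norm_smul, Real.norm_eq_abs,
          abs_of_pos ht0, Real.coe_toNNReal L hL.le] at h
      have h2 := abs_le.1 (abs_real_inner_le_norm (g' (u + t • d) - g' u) d)
      have h3 := mul_le_mul_of_nonneg_right h1 (norm_nonneg d)
      rw [inner_sub_left] at h2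
      nlinarith [h2.1])
  have h := hmono (Set.left_mem_Icc.2 zero_le_one) (Set.right_mem_Icc.2 zero_le_one) zero_le_one
  have e : u + d = y := by rw [hd]; abel
  simp only [zero_smul, add_zero, zero_mul, sub_zero, one_smul, one_mul, e] at h
  linarith

end Helpers

/-- Key inequality (2.8) for Algorithm 1 (concave denominator): for every `x ∈ S` and `k ≥ 1`,
`f(x) − θ_k g(x) ≥ (θ_{k+1} − θ_k) g(x^k) + (Lθ_k/2)‖x^k − x^{k−1}‖² + Lθ_k‖x − x^k‖²
  − Lθ_k‖x − x^{k−1}‖²` (stated with the shift `k ↦ k+1` so that indices range over `ℕ`). -/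
theorem algorithm1_key_inequality
    {H : Type*} [NormedAddCommGroup H] [InnerProductSpace ℝ H] [CompleteSpace H]
    (S : Set H) (hS_ne : S.Nonempty) (hS_conv : Convex ℝ S) (hS_closed : IsClosed S)
    -- f : H → ℝ ∪ {+∞} is encoded via its (nonempty) effective domain D and real values f on D
    (f : H → ℝ) (D : Set H) (hf_proper : D.Nonempty)
    (hf_convex : ConvexOn ℝ D f)
    (hf_lsc : LowerSemicontinuous fun z => if z ∈ D then ((f z : ℝ) : EReal) else ⊤)
    (hDS : (D ∩ S).Nonempty)
    (hf_nonneg : ∀ z ∈ S ∩ D, 0 ≤ f z)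
    (g : H → ℝ) (g' : H → H)
    (hg_grad : ∀ z, HasGradientAt g (g' z) z)
    (hg_concave : ConcaveOn ℝ Set.univ g)
    (L : ℝ) (hL : 0 < L)
    (hg_lip : LipschitzWith (Real.toNNReal L) g')
    (M : ℝ) (hM : 0 < M)
    (hg_pos : ∀ z ∈ S, 0 < g z) (hg_le : ∀ z ∈ S, g z ≤ M)
    -- Algorithm 1: sequences x, θ, η (θ_{k+1} = f(x^k)/g(x^k) for k ≥ 0, η_k = 1/(2Lθ_k) for k ≥ 1)
    (x : ℕ → H) (θ η : ℕ → ℝ)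
    (hx0 : x 0 ∈ S ∩ D)
    (hθ : ∀ k : ℕ, θ (k + 1) = f (x k) / g (x k))
    (hη : ∀ k : ℕ, η (k + 1) = 1 / (2 * L * θ (k + 1)))
    -- x^{k+1} is the minimizer over S of y ↦ f(y) + (1/(2η_{k+1}))‖y − (x^k + θ_{k+1}η_{k+1}∇g(x^k))‖²
    (hstep : ∀ k : ℕ, x (k + 1) ∈ S ∩ D ∧ ∀ y ∈ S ∩ D,
      f (x (k + 1)) + 1 / (2 * η (k + 1)) *
          ‖x (k + 1) - (x k + (θ (k + 1) * η (k + 1)) • g' (x k))‖ ^ 2 ≤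
        f y + 1 / (2 * η (k + 1)) * ‖y - (x k + (θ (k + 1) * η (k + 1)) • g' (x k))‖ ^ 2)
    :
    ∀ k : ℕ, ∀ y ∈ S ∩ D,
      f y - θ (k + 1) * g y ≥
        (θ (k + 2) - θ (k + 1)) * g (x (k + 1)) +
          L * θ (k + 1) / 2 * ‖x (k + 1) - x k‖ ^ 2 +
          L * θ (k + 1) * ‖y - x (k + 1)‖ ^ 2 - L * θ (k + 1) * ‖y - x k‖ ^ 2 := by
  intro k y hy
  have hxk : x k ∈ S ∩ D := by
    cases k with
    | zero => exact hx0
    | succ n => exact (hstep n).1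
  obtain ⟨hx1, hmin⟩ := hstep k
  have hθ0 : 0 ≤ θ (k + 1) := by
    rw [hθ]
    exact div_nonneg (hf_nonneg _ hxk) (hg_pos _ hxk.1).le
  have hθ2 : θ (k + 2) * g (x (k + 1)) = f (x (k + 1)) := by
    rw [hθ (k + 1), div_mul_cancel₀ _ (hg_pos _ hx1.1).ne']
  -- With `θ = 0`, the conventions `1 / 0 = 0` give `η = 0` and a vanishing proximal weight.
  have hw : 1 / (2 * η (k + 1)) = L * θ (k + 1) := by
    rw [hη]
    rcases hθ0.eq_or_lt with h | h
    · simp [← h]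
    · field_simp
  have hgrow := quadratic_growth_of_isMin hS_conv hf_convex hx1 hmin hy
  rw [hw] at hgrow
  rcases hθ0.eq_or_lt with h0 | hpos
  · simp only [← h0, mul_zero, zero_mul, zero_div, add_zero, sub_zero] at hgrow ⊢
    linarith
  have hθη : θ (k + 1) * η (k + 1) = 1 / (2 * L) := by
    rw [hη]
    field_simp
  rw [hθη] at hgrow
  have hconc := concave_gradient_ineq hg_grad hg_concave (x k) y
  have hdesc := descent_lemma hg_grad hL hg_lip (x k) (x (k + 1))
  have hexp : ∀ z : H, L * θ (k + 1) * ‖z - (x k + (1 / (2 * L)) • g' (x k))‖ ^ 2 =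
      L * θ (k + 1) * ‖z - x k‖ ^ 2 - θ (k + 1) * inner ℝ (g' (x k)) (z - x k)
        + L * θ (k + 1) * ‖(1 / (2 * L)) • g' (x k)‖ ^ 2 := by
    intro z
    rw [← sub_sub, norm_sub_sq_real (z - x k), real_inner_smul_right, real_inner_comm]
    field_simp
  rw [hexp, hexp] at hgrow
  have h1 := mul_le_mul_of_nonneg_left hconc hθ0
  have h2 := mul_le_mul_of_nonneg_left hdesc hθ0
  linarith
end

section
/- In the setting of the concave-denominator fractional program and Algorithm 1, for every k ≥ 1 one has (θ_{k+1} − θ_k) g(x^k) + (3Lθ_k/2)‖x^k − x^{k−1}‖² ≤ 0; in particular the sequence (θ_k)_{k≥1} is nonincreasing and convergent. -/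
/-!
Write `p = x (k + 1)`, `u = x k`, `d = p - u`, `θ = θ (k + 1)`. Since `f u = θ * g u` and `f ≥ 0`,
it follows that `θ ≥ 0`.

If `θ > 0`, the objective of the step is `f + L θ ‖· - c‖²` with `c = u + g' u / (2 L)`. Its strong
convexity makes the value at `u` exceed the minimum by at least `L θ ‖d‖²`
(`prox_three_point`), which after expanding the squares reads
`f p + 2 L θ ‖d‖² ≤ θ (g u + ⟪g' u, d⟫)`. The descent lemma for the `L`-Lipschitz gradient
(`descent_lower`) bounds the right-hand side by `θ (g p + L / 2 * ‖d‖²)`, and `f p = θ (k + 2) * g p`.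

If `θ = 0`, the conventions `1 / 0 = 0` make the penalty vanish, so `p` minimizes `f` itself and
`f p = 0`.

Monotonicity follows from `g p > 0`, and convergence from `θ ≥ 0`.
-/

open Filter Topology Classical

/-- The lower half of the descent lemma for a function with `L`-Lipschitz gradient. -/
lemma descent_lower {H : Type*} [NormedAddCommGroup H] [InnerProductSpace ℝ H] [CompleteSpace H]
    (g : H → ℝ) (g' : H → H) (hg_grad : ∀ z, HasGradientAt g (g' z) z)
    (L : ℝ) (hL : 0 < L) (hg_lip : LipschitzWith (Real.toNNReal L) g') (u d : H) :
    g u + inner ℝ (g' u) d - L / 2 * ‖d‖ ^ 2 ≤ g (u + d) := by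
  -- the gap between `g` and its quadratic minorant along the segment is nondecreasing
  let h : ℝ → ℝ := fun t => g (u + t • d) - t * inner ℝ (g' u) d + L / 2 * ‖d‖ ^ 2 * t ^ 2
  have hd : ∀ t : ℝ, HasDerivAt h
      (inner ℝ (g' (u + t • d)) d - inner ℝ (g' u) d + L * ‖d‖ ^ 2 * t) t := by
    intro t
    have h1 : HasDerivAt (fun t : ℝ => u + t • d) d t := by
      simpa using ((hasDerivAt_id t).smul_const d).const_add u
    have h2 : HasDerivAt (fun t : ℝ => g (u + t • d)) (inner ℝ (g' (u + t • d)) d) t := by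
      refine ((hg_grad (u + t • d)).hasFDerivAt.comp_hasDerivAt t h1).congr_deriv ?_
      simp
    have h3 := (h2.sub ((hasDerivAt_id t).mul_const (inner ℝ (g' u) d))).add
      (((hasDerivAt_id t).pow 2).const_mul (L / 2 * ‖d‖ ^ 2))
    refine h3.congr_deriv ?_
    simp
    ring
  have hmono : MonotoneOn h (Set.Ici 0) := by
    refine monotoneOn_of_deriv_nonneg (convex_Ici 0)
      (fun t _ => (hd t).continuousAt.continuousWithinAt)
      (fun t _ => (hd t).differentiableAt.differentiableWithinAt) ?_
    intro t ht
    rw [interior_Ici, Set.mem_Ioi] at ht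
    rw [(hd t).deriv, ← inner_sub_left]
    have h1 := hg_lip.norm_sub_le (u + t • d) u
    rw [Real.coe_toNNReal L hL.le, add_sub_cancel_left, norm_smul, Real.norm_of_nonneg ht.le] at h1
    have h2 := neg_le_of_abs_le (abs_real_inner_le_norm (g' (u + t • d) - g' u) d)
    nlinarith [mul_le_mul_of_nonneg_right h1 (norm_nonneg d)]
  have := hmono (Set.mem_Ici.2 le_rfl) (Set.mem_Ici.2 zero_le_one) zero_le_one
  simp only [h, zero_smul, one_smul, add_zero] at this
  linarith

/-- Quadratic growth of `f + r ‖· - c‖²` away from its minimizer `p`, for `f` convex. -/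
lemma prox_three_point {H : Type*} [NormedAddCommGroup H] [InnerProductSpace ℝ H]
    (S D : Set H) (hS : Convex ℝ S) (f : H → ℝ) (hf : ConvexOn ℝ D f) (r : ℝ) (c p u : H)
    (hp : p ∈ S ∩ D) (hu : u ∈ S ∩ D)
    (hmin : ∀ y ∈ S ∩ D, f p + r * ‖p - c‖ ^ 2 ≤ f y + r * ‖y - c‖ ^ 2) :
    f p + r * ‖p - c‖ ^ 2 + r * ‖u - p‖ ^ 2 ≤ f u + r * ‖u - c‖ ^ 2 := by
  have hexp : ∀ t : ℝ, ‖(p + t • (u - p)) - c‖ ^ 2 =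
      ‖p - c‖ ^ 2 + 2 * t * inner ℝ (p - c) (u - p) + t ^ 2 * ‖u - p‖ ^ 2 := by
    intro t
    rw [add_sub_right_comm, norm_add_sq_real, inner_smul_right, norm_smul, mul_pow,
      Real.norm_eq_abs, sq_abs]
    ring
  have hu' := hexp 1
  rw [one_smul, add_sub_cancel] at hu'
  -- minimality tested at points of the segment near `p`, then divided by `t`
  have key : ∀ t : ℝ, 0 < t → t ≤ 1 →
      f p - f u - 2 * r * inner ℝ (p - c) (u - p) ≤ t * (r * ‖u - p‖ ^ 2) := by
    intro t ht ht1
    have hy : p + t • (u - p) = (1 - t) • p + t • u := by module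
    have hm : p + t • (u - p) ∈ S ∩ D := by
      rw [hy]
      exact ⟨hS hp.1 hu.1 (by linarith) ht.le (by ring),
        hf.1 hp.2 hu.2 (by linarith) ht.le (by ring)⟩
    have h1 := hmin _ hm
    rw [hexp t] at h1
    have h2 := hf.2 hp.2 hu.2 (show 0 ≤ 1 - t by linarith) ht.le (by ring)
    rw [← hy, smul_eq_mul, smul_eq_mul] at h2
    refine le_of_mul_le_mul_left ?_ ht
    linarith
  have hlim : f p - f u - 2 * r * inner ℝ (p - c) (u - p) ≤ 0 := by
    have ht : Tendsto (fun t : ℝ => t * (r * ‖u - p‖ ^ 2)) (𝓝[>] 0) (𝓝 0) := by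
      have : Tendsto (fun t : ℝ => t * (r * ‖u - p‖ ^ 2)) (𝓝 0) (𝓝 (0 * (r * ‖u - p‖ ^ 2))) :=
        (continuous_id.mul continuous_const).tendsto 0
      rw [zero_mul] at this
      exact this.mono_left nhdsWithin_le_nhds
    refine ge_of_tendsto ht ?_
    filter_upwards [Ioc_mem_nhdsGT (zero_lt_one' ℝ)] with t ht
    exact key t ht.1 ht.2
  rw [hu']
  linarith

/-- For Algorithm 1 (concave denominator): `(θ_{k+1} − θ_k) g(x^k) + (3Lθ_k/2)‖x^k − x^{k−1}‖² ≤ 0`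
for all `k ≥ 1`; in particular `(θ_k)_{k≥1}` is nonincreasing and convergent. -/
theorem algorithm1_theta_monotone
    {H : Type*} [NormedAddCommGroup H] [InnerProductSpace ℝ H] [CompleteSpace H]
    (S : Set H) (hS_ne : S.Nonempty) (hS_conv : Convex ℝ S) (hS_closed : IsClosed S)
    -- f : H → ℝ ∪ {+∞} is encoded via its (nonempty) effective domain D and real values f on D
    (f : H → ℝ) (D : Set H) (hf_proper : D.Nonempty)
    (hf_convex : ConvexOn ℝ D f)
    (hf_lsc : LowerSemicontinuous fun z => if z ∈ D then ((f z : ℝ) : EReal) else ⊤)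
    (hDS : (D ∩ S).Nonempty)
    (hf_nonneg : ∀ z ∈ S ∩ D, 0 ≤ f z)
    (g : H → ℝ) (g' : H → H)
    (hg_grad : ∀ z, HasGradientAt g (g' z) z)
    (hg_concave : ConcaveOn ℝ Set.univ g)
    (L : ℝ) (hL : 0 < L)
    (hg_lip : LipschitzWith (Real.toNNReal L) g')
    (M : ℝ) (hM : 0 < M)
    (hg_pos : ∀ z ∈ S, 0 < g z) (hg_le : ∀ z ∈ S, g z ≤ M)
    -- Algorithm 1: sequences x, θ, η (θ_{k+1} = f(x^k)/g(x^k) for k ≥ 0, η_k = 1/(2Lθ_k) for k ≥ 1)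
    (x : ℕ → H) (θ η : ℕ → ℝ)
    (hx0 : x 0 ∈ S ∩ D)
    (hθ : ∀ k : ℕ, θ (k + 1) = f (x k) / g (x k))
    (hη : ∀ k : ℕ, η (k + 1) = 1 / (2 * L * θ (k + 1)))
    -- x^{k+1} is the minimizer over S of y ↦ f(y) + (1/(2η_{k+1}))‖y − (x^k + θ_{k+1}η_{k+1}∇g(x^k))‖²
    (hstep : ∀ k : ℕ, x (k + 1) ∈ S ∩ D ∧ ∀ y ∈ S ∩ D,
      f (x (k + 1)) + 1 / (2 * η (k + 1)) *
          ‖x (k + 1) - (x k + (θ (k + 1) * η (k + 1)) • g' (x k))‖ ^ 2 ≤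
        f y + 1 / (2 * η (k + 1)) * ‖y - (x k + (θ (k + 1) * η (k + 1)) • g' (x k))‖ ^ 2)
    :
    (∀ k : ℕ, (θ (k + 2) - θ (k + 1)) * g (x (k + 1)) +
        3 * L * θ (k + 1) / 2 * ‖x (k + 1) - x k‖ ^ 2 ≤ 0) ∧
      (∀ k : ℕ, θ (k + 2) ≤ θ (k + 1)) ∧
      (∃ t : ℝ, Tendsto (fun k : ℕ => θ (k + 1)) atTop (𝓝 t)) := by
  have hx : ∀ k, x k ∈ S ∩ D := by
    intro k
    cases k with
    | zero => exact hx0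
    | succ k => exact (hstep k).1
  have hθ0 : ∀ k, 0 ≤ θ (k + 1) := fun k => by
    rw [hθ]
    exact div_nonneg (hf_nonneg _ (hx k)) (hg_pos _ (hx k).1).le
  have hfx : ∀ k, f (x k) = θ (k + 1) * g (x k) := fun k => by
    rw [hθ, div_mul_cancel₀ _ (hg_pos _ (hx k).1).ne']
  have main : ∀ k : ℕ, (θ (k + 2) - θ (k + 1)) * g (x (k + 1)) +
        3 * L * θ (k + 1) / 2 * ‖x (k + 1) - x k‖ ^ 2 ≤ 0 := by
    intro k
    have hfp := hfx (k + 1)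
    have hfu := hfx k
    have hst := (hstep k).2
    rcases (hθ0 k).eq_or_lt with h0 | hpos
    · have := hst _ (hx k)
      -- here `η (k + 1) = 1 / 0 = 0`, so the penalty has coefficient `1 / 0 = 0`
      simp only [hη, ← h0, mul_zero, div_zero, zero_mul, add_zero] at this
      rw [← h0] at hfu ⊢
      simp only [add_assoc, Nat.reduceAdd] at hfp
      linarith
    · have h1 : 1 / (2 * η (k + 1)) = L * θ (k + 1) := by
        rw [hη]; field_simp
      have h2 : θ (k + 1) * η (k + 1) = 1 / (2 * L) := by
        rw [hη]; field_simp
      rw [h1, h2] at hst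
      have h3 := prox_three_point S D hS_conv f hf_convex _ _ _ _ (hx (k + 1)) (hx k) hst
      have h4 := descent_lower g g' hg_grad L hL hg_lip (x k) (x (k + 1) - x k)
      rw [add_sub_cancel] at h4
      rw [← sub_sub, norm_sub_sq_real (x (k + 1) - x k), sub_add_cancel_left, norm_neg,
        inner_smul_right, real_inner_comm, norm_sub_rev (x k) (x (k + 1))] at h3
      have h5 : L * θ (k + 1) * (2 * (1 / (2 * L) * inner ℝ (g' (x k)) (x (k + 1) - x k))) =
          θ (k + 1) * inner ℝ (g' (x k)) (x (k + 1) - x k) := by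
        field_simp
      have h6 := mul_le_mul_of_nonneg_left h4 hpos.le
      simp only [add_assoc, Nat.reduceAdd] at hfp
      linarith
  have hanti : ∀ k : ℕ, θ (k + 2) ≤ θ (k + 1) := by
    intro k
    have hg := hg_pos _ (hx (k + 1)).1
    have h1 : 0 ≤ 3 * L * θ (k + 1) / 2 * ‖x (k + 1) - x k‖ ^ 2 := by
      have := hθ0 k
      positivity
    have h2 : (θ (k + 2) - θ (k + 1)) * g (x (k + 1)) ≤ 0 := by linarith [main k]
    exact sub_nonpos.1 (nonpos_of_mul_nonpos_left h2 hg)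
  refine ⟨main, hanti, _, tendsto_atTop_ciInf (antitone_nat_of_succ_le hanti) ⟨0, ?_⟩⟩
  rintro _ ⟨k, rfl⟩
  exact hθ0 k
end

section
/- In the setting of the concave-denominator fractional program and Algorithm 1, assuming the solution set C is nonempty, the sequence (θ_k)_{k≥1} converges to θ̄ = inf_{x∈S} f(x)/g(x). -/
/-! The subproblem objective is, up to a constant, the `2Lθ`-strongly convex function
`y ↦ f y - θ⟪∇g(xᵏ), y - xᵏ⟫ + Lθ‖y - xᵏ‖²`. Strong convexity at its minimizer (`three_point`),
combined with the tangent inequality for the concave `g` at `xᵏ` and its lower counterpart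
(`descent`), gives for every `y ∈ S ∩ D`, writing `θ = θₖ₊₁`,

  `f(xᵏ⁺¹) - θ g(xᵏ⁺¹) + Lθ‖y - xᵏ⁺¹‖² ≤ f y - θ g y + Lθ‖y - xᵏ‖²`.

Taking `y = xᵏ` shows that `θ` is antitone. If it stayed above `θ̄ + ε`, then `y` a solution `x̄`
would give, after division by `θ`, a decrease of the nonnegative potential
`L‖x̄ - xᵏ‖² + (M / ε) θₖ₊₁` by a fixed positive amount at each step, which is impossible.

When some `θₖ₊₁ = 0`, Lean's `1 / 0 = 0` gives `ηₖ₊₁ = 0` and `1 / (2ηₖ₊₁) = 0 = Lθₖ₊₁`, so the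
inequality above holds in that case too and no separate treatment is needed. -/

open Filter Topology Classical

section Aux

variable {H : Type*} [NormedAddCommGroup H] [InnerProductSpace ℝ H]

/-- Tangent inequality: a concave function lies below its linearization. It is reduced to one
real variable along the segment from `a` to `b`. -/
theorem concave_tangent [CompleteSpace H] {g : H → ℝ} {g' : H → H}
    (hg_grad : ∀ z, HasGradientAt g (g' z) z) (hg_concave : ConcaveOn ℝ Set.univ g) (a b : H) :
    g b ≤ g a + inner ℝ (g' a) (b - a) := by
  have hconc : ConcaveOn ℝ Set.univ (g ∘ AffineMap.lineMap (k := ℝ) a b) :=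
    hg_concave.comp_affineMap (AffineMap.lineMap (k := ℝ) a b)
  have hder : HasDerivAt (g ∘ AffineMap.lineMap (k := ℝ) a b) (inner ℝ (g' a) (b - a)) 0 := by
    have h1 : HasFDerivAt g (InnerProductSpace.toDual ℝ H (g' a))
        (AffineMap.lineMap (k := ℝ) a b (0 : ℝ)) := by
      simpa using (hg_grad a).hasFDerivAt
    have h2 := h1.comp_hasDerivAt (0 : ℝ) (AffineMap.hasDerivAt_lineMap (a := a) (b := b))
    simpa using h2
  have h := hconc.slope_le_of_hasDerivAt (Set.mem_univ 0) (Set.mem_univ 1) one_pos hder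
  simp [slope_def_field] at h
  linarith

/-- Lower quadratic bound for a concave function with `L`-Lipschitz gradient. The constant is `L`
rather than the optimal `L / 2`, which lets it follow from the tangent inequality at `b` without
integration. -/
theorem descent [CompleteSpace H] {g : H → ℝ} {g' : H → H}
    (hg_grad : ∀ z, HasGradientAt g (g' z) z) (hg_concave : ConcaveOn ℝ Set.univ g)
    {L : ℝ} (hL : 0 < L) (hg_lip : LipschitzWith (Real.toNNReal L) g') (a b : H) :
    g a + inner ℝ (g' a) (b - a) - L * ‖b - a‖ ^ 2 ≤ g b := by
  have h1 := concave_tangent hg_grad hg_concave b a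
  have h2 := hg_lip.norm_sub_le b a
  rw [Real.coe_toNNReal _ hL.le] at h2
  have h3 := neg_le_of_abs_le (abs_real_inner_le_norm (g' b - g' a) (b - a))
  have h4 : inner ℝ (g' b) (a - b) = - inner ℝ (g' b - g' a) (b - a) - inner ℝ (g' a) (b - a) := by
    rw [← neg_sub b a, inner_neg_right, inner_sub_left]; ring
  have h5 := mul_le_mul_of_nonneg_right h2 (norm_nonneg (b - a))
  nlinarith

/-- Strong-convexity improvement of the minimality inequality: if `u` minimizes
`f + c‖· - p‖²` over a convex set, the gap at `y` is at least `c‖y - u‖²`. -/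
theorem three_point {f : H → ℝ} {K : Set H} (hf : ConvexOn ℝ K f) {c : ℝ} {p u y : H}
    (hu : u ∈ K) (hy : y ∈ K)
    (hmin : ∀ z ∈ K, f u + c * ‖u - p‖ ^ 2 ≤ f z + c * ‖z - p‖ ^ 2) :
    f u + c * ‖u - p‖ ^ 2 + c * ‖y - u‖ ^ 2 ≤ f y + c * ‖y - p‖ ^ 2 := by
  have key : ∀ t : ℝ, 0 < t → t < 1 →
      f u + c * ‖u - p‖ ^ 2 + (1 - t) * (c * ‖y - u‖ ^ 2) ≤ f y + c * ‖y - p‖ ^ 2 := by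
    intro t ht ht1
    have hz := hf.1 hu hy (sub_nonneg.2 ht1.le) ht.le (by ring)
    have hfz := hf.2 hu hy (sub_nonneg.2 ht1.le) ht.le (by ring)
    have hm := hmin _ hz
    have e1 : (1 - t) • u + t • y - p = (u - p) + t • (y - u) := by module
    have e2 : y - p = (u - p) + (y - u) := by abel
    rw [e1, norm_add_sq_real, inner_smul_right, norm_smul, mul_pow, Real.norm_eq_abs, sq_abs] at hm
    rw [e2, norm_add_sq_real]
    simp only [smul_eq_mul] at hfz
    refine le_of_mul_le_mul_left ?_ ht
    nlinarith
  have hlim : Tendsto (fun t : ℝ => f u + c * ‖u - p‖ ^ 2 + (1 - t) * (c * ‖y - u‖ ^ 2))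
      (𝓝[>] 0) (𝓝 (f u + c * ‖u - p‖ ^ 2 + (1 - 0) * (c * ‖y - u‖ ^ 2))) :=
    (Continuous.tendsto (by fun_prop) 0).mono_left nhdsWithin_le_nhds
  rw [sub_zero, one_mul] at hlim
  refine le_of_tendsto hlim ?_
  filter_upwards [Ioo_mem_nhdsGT (zero_lt_one' ℝ)] with t ht
  exact key t ht.1 ht.2

end Aux

/-- For Algorithm 1 (concave denominator), with nonempty solution set `C`:
the sequence `(θ_k)_{k≥1}` converges to `θ̄ = inf_{x ∈ S} f(x)/g(x)`. -/
theorem algorithm1_theta_tendsto_inf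
    {H : Type*} [NormedAddCommGroup H] [InnerProductSpace ℝ H] [CompleteSpace H]
    (S : Set H) (hS_ne : S.Nonempty) (hS_conv : Convex ℝ S) (hS_closed : IsClosed S)
    -- f : H → ℝ ∪ {+∞} is encoded via its (nonempty) effective domain D and real values f on D
    (f : H → ℝ) (D : Set H) (hf_proper : D.Nonempty)
    (hf_convex : ConvexOn ℝ D f)
    (hf_lsc : LowerSemicontinuous fun z => if z ∈ D then ((f z : ℝ) : EReal) else ⊤)
    (hDS : (D ∩ S).Nonempty)
    (hf_nonneg : ∀ z ∈ S ∩ D, 0 ≤ f z)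
    (g : H → ℝ) (g' : H → H)
    (hg_grad : ∀ z, HasGradientAt g (g' z) z)
    (hg_concave : ConcaveOn ℝ Set.univ g)
    (L : ℝ) (hL : 0 < L)
    (hg_lip : LipschitzWith (Real.toNNReal L) g')
    (M : ℝ) (hM : 0 < M)
    (hg_pos : ∀ z ∈ S, 0 < g z) (hg_le : ∀ z ∈ S, g z ≤ M)
    -- Algorithm 1: sequences x, θ, η (θ_{k+1} = f(x^k)/g(x^k) for k ≥ 0, η_k = 1/(2Lθ_k) for k ≥ 1)
    (x : ℕ → H) (θ η : ℕ → ℝ)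
    (hx0 : x 0 ∈ S ∩ D)
    (hθ : ∀ k : ℕ, θ (k + 1) = f (x k) / g (x k))
    (hη : ∀ k : ℕ, η (k + 1) = 1 / (2 * L * θ (k + 1)))
    -- x^{k+1} is the minimizer over S of y ↦ f(y) + (1/(2η_{k+1}))‖y − (x^k + θ_{k+1}η_{k+1}∇g(x^k))‖²
    (hstep : ∀ k : ℕ, x (k + 1) ∈ S ∩ D ∧ ∀ y ∈ S ∩ D,
      f (x (k + 1)) + 1 / (2 * η (k + 1)) *
          ‖x (k + 1) - (x k + (θ (k + 1) * η (k + 1)) • g' (x k))‖ ^ 2 ≤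
        f y + 1 / (2 * η (k + 1)) * ‖y - (x k + (θ (k + 1) * η (k + 1)) • g' (x k))‖ ^ 2)
    -- θ̄ = inf_{z ∈ S} f(z)/g(z) and the solution set C = {z ∈ S : f(z)/g(z) = θ̄} is nonempty
    (θbar : ℝ) (hθbar : IsGLB ((fun z => f z / g z) '' (S ∩ D)) θbar)
    (hC_ne : ∃ xb ∈ S ∩ D, f xb / g xb = θbar)
    :
    Tendsto (fun k : ℕ => θ (k + 1)) atTop (𝓝 θbar) := by
  obtain ⟨xb, hxb, hxbθ⟩ := hC_ne
  have hx : ∀ k, x k ∈ S ∩ D := fun k => by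
    cases k with
    | zero => exact hx0
    | succ k => exact (hstep k).1
  have hfθ : ∀ k, f (x k) = θ (k + 1) * g (x k) := fun k => by
    rw [hθ, div_mul_cancel₀ _ (hg_pos _ (hx k).1).ne']
  have hfb : f xb = θbar * g xb := by
    rw [← hxbθ, div_mul_cancel₀ _ (hg_pos _ hxb.1).ne']
  have hθbar0 : 0 ≤ θbar := hxbθ ▸ div_nonneg (hf_nonneg _ hxb) (hg_pos _ hxb.1).le
  have hθge : ∀ k, θbar ≤ θ (k + 1) := fun k => by
    rw [hθ]; exact hθbar.1 ⟨x k, hx k, rfl⟩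
  have hθ0 : ∀ k, 0 ≤ θ (k + 1) := fun k => hθbar0.trans (hθge k)
  have hfS : ConvexOn ℝ (S ∩ D) f :=
    hf_convex.subset Set.inter_subset_right (hS_conv.inter hf_convex.1)
  have main : ∀ k, ∀ y ∈ S ∩ D,
      f (x (k + 1)) - θ (k + 1) * g (x (k + 1)) + L * θ (k + 1) * ‖y - x (k + 1)‖ ^ 2
        ≤ f y - θ (k + 1) * g y + L * θ (k + 1) * ‖y - x k‖ ^ 2 := by
    intro k y hy
    have h := three_point hfS (hstep k).1 hy (hstep k).2
    -- Both identities survive `θ = 0`, thanks to `1 / 0 = 0`.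
    have hc : 1 / (2 * η (k + 1)) = L * θ (k + 1) := by
      rw [hη]
      rcases eq_or_ne (θ (k + 1)) 0 with h0 | h0
      · simp [h0]
      · field_simp
    have hs : 2 * (L * θ (k + 1)) * (θ (k + 1) * η (k + 1)) = θ (k + 1) := by
      rw [hη]
      rcases eq_or_ne (θ (k + 1)) 0 with h0 | h0
      · simp [h0]
      · field_simp
    have expand : ∀ z, L * θ (k + 1) * ‖z - (x k + (θ (k + 1) * η (k + 1)) • g' (x k))‖ ^ 2
        = L * θ (k + 1) * ‖z - x k‖ ^ 2 - θ (k + 1) * inner ℝ (g' (x k)) (z - x k)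
          + L * θ (k + 1) * ‖(θ (k + 1) * η (k + 1)) • g' (x k)‖ ^ 2 := by
      intro z
      rw [← sub_sub, norm_sub_sq_real, inner_smul_right, real_inner_comm]
      linear_combination (-inner ℝ (g' (x k)) (z - x k)) * hs
    rw [hc, expand, expand] at h
    have h1 := mul_le_mul_of_nonneg_left
      (concave_tangent hg_grad hg_concave (x k) y) (hθ0 k)
    have h2 := mul_le_mul_of_nonneg_left
      (descent hg_grad hg_concave hL hg_lip (x k) (x (k + 1))) (hθ0 k)
    nlinarith
  have hdec : ∀ k, θ (k + 2) ≤ θ (k + 1) := by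
    intro k
    have h := main k (x k) (hx k)
    rw [hfθ k, hfθ (k + 1), sub_self (x k), norm_zero] at h
    have h2 : 0 ≤ L * θ (k + 1) * ‖x k - x (k + 1)‖ ^ 2 :=
      mul_nonneg (mul_nonneg hL.le (hθ0 k)) (sq_nonneg _)
    refine le_of_mul_le_mul_right ?_ (hg_pos _ (hx (k + 1)).1)
    nlinarith
  have hanti : Antitone fun k => θ (k + 1) := antitone_nat_of_succ_le hdec
  suffices hsmall : ∀ ε > 0, ∃ k, θ (k + 1) < θbar + ε by
    refine tendsto_order.2 ⟨fun a ha => Eventually.of_forall fun k => ha.trans_le (hθge k),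
      fun a ha => ?_⟩
    obtain ⟨N, hN⟩ := hsmall (a - θbar) (sub_pos.2 ha)
    filter_upwards [eventually_ge_atTop N] with k hk
    have : θ (k + 1) ≤ θ (N + 1) := hanti hk
    linarith
  by_contra! hcon
  obtain ⟨ε, hε, hbig⟩ := hcon
  have hgb := hg_pos _ hxb.1
  have hεθ : ∀ k, ε ≤ θ (k + 1) := fun k => by linarith [hbig k]
  have hθ1 : 0 < θ 1 := hε.trans_le (hεθ 0)
  set c := ε * g xb / θ 1 with hcdef
  have hcpos : 0 < c := by positivity
  have hpot : ∀ k, (L * ‖xb - x (k + 1)‖ ^ 2 + M / ε * θ (k + 2)) + c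
      ≤ L * ‖xb - x k‖ ^ 2 + M / ε * θ (k + 1) := by
    intro k
    have h := main k xb hxb
    rw [hfθ (k + 1), hfb] at h
    have hpos : 0 < θ (k + 1) := hε.trans_le (hεθ k)
    have hle1 : θ (k + 1) ≤ θ 1 := hanti (Nat.zero_le k)
    have hd : 0 ≤ θ (k + 1) - θ (k + 2) := sub_nonneg.2 (hdec k)
    have hc1 : θ (k + 1) * c ≤ ε * g xb := by
      calc θ (k + 1) * c ≤ θ 1 * c := by gcongr
        _ = ε * g xb := by rw [hcdef]; field_simp
    have hc2 : ε * g xb ≤ (θ (k + 1) - θbar) * g xb :=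
      mul_le_mul_of_nonneg_right (by linarith [hbig k]) hgb.le
    have hM1 : (θ (k + 1) - θ (k + 2)) * g (x (k + 1)) ≤ (θ (k + 1) - θ (k + 2)) * M :=
      mul_le_mul_of_nonneg_left (hg_le _ (hx (k + 1)).1) hd
    have hM2 : (θ (k + 1) - θ (k + 2)) * M
        ≤ θ (k + 1) * (M / ε * (θ (k + 1) - θ (k + 2))) := by
      calc (θ (k + 1) - θ (k + 2)) * M = ε * (M / ε * (θ (k + 1) - θ (k + 2))) := by
            field_simp
        _ ≤ _ := mul_le_mul_of_nonneg_right (hεθ k) (by positivity)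
    refine le_of_mul_le_mul_left ?_ hpos
    nlinarith
  have hsum : ∀ k : ℕ, (L * ‖xb - x k‖ ^ 2 + M / ε * θ (k + 1)) + k * c
      ≤ L * ‖xb - x 0‖ ^ 2 + M / ε * θ 1 := by
    intro k
    induction k with
    | zero => simp
    | succ k ih => push_cast; linarith [hpot k]
  obtain ⟨n, hn⟩ := exists_nat_gt ((L * ‖xb - x 0‖ ^ 2 + M / ε * θ 1) / c)
  rw [div_lt_iff₀ hcpos] at hn
  have hnonneg : 0 ≤ L * ‖xb - x n‖ ^ 2 + M / ε * θ (n + 1) :=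
    add_nonneg (by positivity) (mul_nonneg (by positivity) (hθ0 n))
  linarith [hsum n]
end

section
/- In the setting of the concave-denominator fractional program and Algorithm 1, assume additionally that inf_{x∈S} f(x)/g(x) > 0 and that the solution set C is nonempty. Then x^k − x^{k−1} → 0 strongly as k → ∞ and, for every x̄ ∈ C, the real sequence (‖x̄ − x^k‖)_{k≥1} is convergent. -/
/-!
Fix a step from `x` to `y` with ratio `t = f x / g x` and new ratio `t' = f y / g y`. The proximal
minimality of `y` yields a variational inequality (`prox_variational`); combined with
the concave gradient inequality and the Lipschitz bound on the gradient it gives, for every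
`z ∈ S ∩ dom f`,
`f y - t g y + L t ‖z - y‖² ≤ f z - t g z + L t ‖z - x‖²` (`step_estimate`).

* With `z = x` the right-hand side vanishes, so `L t ‖y - x‖² ≤ (t - t') g y ≤ (t - t') M`: the
  ratios decrease, hence converge since they are bounded below by `θbar`, and because
  `t ≥ θbar > 0` the increments tend to zero.
* With `z = xb` a minimizer, `f xb - t g xb ≤ 0`, hence
  `‖xb - y‖² ≤ ‖xb - x‖² + c (t - t')` with `c = M / (L θbar)`. So `‖xb - x k‖² + c θ (k + 1)` is
  nonincreasing and bounded below; it converges, and so does `‖xb - x k‖`.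
-/

open Filter Topology Classical

lemma ConcaveOn.le_add_inner_gradient {H : Type*} [NormedAddCommGroup H] [InnerProductSpace ℝ H]
    [CompleteSpace H] {g : H → ℝ} {g' : H → H} (hg_grad : ∀ z, HasGradientAt g (g' z) z)
    (hg : ConcaveOn ℝ Set.univ g) (x z : H) : g z ≤ g x + inner ℝ (g' x) (z - x) := by
  have hc : ConcaveOn ℝ Set.univ (g ∘ AffineMap.lineMap (k := ℝ) x z) := by
    simpa using hg.comp_affineMap (AffineMap.lineMap (k := ℝ) x z)
  have hd : HasDerivAt (g ∘ AffineMap.lineMap (k := ℝ) x z) (inner ℝ (g' x) (z - x)) 0 := by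
    have h1 : HasDerivAt (AffineMap.lineMap (k := ℝ) x z) (z - x) (0 : ℝ) :=
      AffineMap.hasDerivAt_lineMap
    have h2 : HasFDerivAt g (InnerProductSpace.toDual ℝ H (g' x))
        (AffineMap.lineMap (k := ℝ) x z 0) := by
      rw [AffineMap.lineMap_apply_zero]
      exact (hg_grad x).hasFDerivAt
    simpa using h2.comp_hasDerivAt 0 h1
  have h := hc.slope_le_of_hasDerivAt (Set.mem_univ 0) (Set.mem_univ 1) one_pos hd
  simp [slope_def_field] at h
  linarith

/-- First-order optimality for a proximal step, obtained by comparing the minimizer `y` with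
`y + s (z - y)` and letting `s` tend to `0`. -/
lemma prox_variational {H : Type*} [NormedAddCommGroup H] [InnerProductSpace ℝ H]
    {S D : Set H} (hS : Convex ℝ S) {f : H → ℝ} (hf : ConvexOn ℝ D f) {a : ℝ}
    {v y z : H} (hy : y ∈ S ∩ D) (hz : z ∈ S ∩ D)
    (hmin : ∀ w ∈ S ∩ D, f y + a * ‖y - v‖ ^ 2 ≤ f w + a * ‖w - v‖ ^ 2) :
    f y ≤ f z + 2 * a * inner ℝ (y - v) (z - y) := by
  have key : ∀ s ∈ Set.Ioo (0 : ℝ) 1,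
      f y ≤ f z + 2 * a * inner ℝ (y - v) (z - y) + s * (a * ‖z - y‖ ^ 2) := by
    rintro s ⟨hs0, hs1⟩
    have hw := hmin ((1 - s) • y + s • z)
      ⟨hS hy.1 hz.1 (by linarith) hs0.le (by ring), hf.1 hy.2 hz.2 (by linarith) hs0.le (by ring)⟩
    have hcv := hf.2 hy.2 hz.2 (by linarith : 0 ≤ 1 - s) hs0.le (by ring)
    have he : (1 - s) • y + s • z - v = (y - v) + s • (z - y) := by module
    rw [he, norm_add_sq_real, inner_smul_right, norm_smul, mul_pow, Real.norm_eq_abs, sq_abs] at hw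
    simp only [smul_eq_mul] at hcv
    refine le_of_mul_le_mul_left ?_ hs0
    nlinarith
  have ht : Tendsto (fun s : ℝ => f z + 2 * a * inner ℝ (y - v) (z - y) + s * (a * ‖z - y‖ ^ 2))
      (𝓝[>] 0) (𝓝 (f z + 2 * a * inner ℝ (y - v) (z - y))) := by
    have : Continuous
        (fun s : ℝ => f z + 2 * a * inner ℝ (y - v) (z - y) + s * (a * ‖z - y‖ ^ 2)) := by fun_prop
    simpa using (this.tendsto 0).mono_left nhdsWithin_le_nhds
  refine ge_of_tendsto ht ?_
  filter_upwards [Ioo_mem_nhdsGT (zero_lt_one' ℝ)] with s hs using key s hs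

/-- The basic inequality of the algorithm: `y` is obtained from `x` by the proximal step with
parameter `t` and step size `1 / (2 L t)`, and is compared with an arbitrary feasible `z`. -/
lemma step_estimate {H : Type*} [NormedAddCommGroup H] [InnerProductSpace ℝ H] [CompleteSpace H]
    {S D : Set H} (hS : Convex ℝ S) {f : H → ℝ} (hf : ConvexOn ℝ D f)
    {g : H → ℝ} {g' : H → H} (hg_grad : ∀ z, HasGradientAt g (g' z) z)
    (hg : ConcaveOn ℝ Set.univ g) {L : ℝ} (hL : 0 < L)
    (hg_lip : LipschitzWith (Real.toNNReal L) g') {t : ℝ} (ht : 0 < t)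
    {x y z : H} (hy : y ∈ S ∩ D) (hz : z ∈ S ∩ D)
    (hmin : ∀ w ∈ S ∩ D, f y + L * t * ‖y - (x + (1 / (2 * L)) • g' x)‖ ^ 2 ≤
      f w + L * t * ‖w - (x + (1 / (2 * L)) • g' x)‖ ^ 2) :
    f y - t * g y + L * t * ‖z - y‖ ^ 2 ≤ f z - t * g z + L * t * ‖z - x‖ ^ 2 := by
  have h1 := prox_variational hS hf hy hz hmin
  have he : inner ℝ (y - (x + (1 / (2 * L)) • g' x)) (z - y)
      = inner ℝ (y - x) (z - y) - 1 / (2 * L) * inner ℝ (g' x) (z - y) := by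
    rw [← sub_sub, inner_sub_left, real_inner_smul_left]
  have he2 : 2 * (L * t) * inner ℝ (y - (x + (1 / (2 * L)) • g' x)) (z - y)
      = 2 * (L * t) * inner ℝ (y - x) (z - y) - t * inner ℝ (g' x) (z - y) := by
    rw [he]; field_simp
  have h3 : ‖z - x‖ ^ 2 = ‖y - x‖ ^ 2 + 2 * inner ℝ (y - x) (z - y) + ‖z - y‖ ^ 2 := by
    rw [← norm_add_sq_real]; congr 2; abel
  have h4 := hg.le_add_inner_gradient hg_grad x z
  -- Concavity at `y` and the Lipschitz bound give the lower estimate of `g y` around `x`; the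
  -- constant `L` instead of `L / 2` is enough.
  have h5 := hg.le_add_inner_gradient hg_grad y x
  have h6 : inner ℝ (g' x - g' y) (y - x) ≤ L * ‖y - x‖ ^ 2 := by
    have hl := hg_lip.dist_le_mul x y
    rw [Real.coe_toNNReal L hL.le, dist_eq_norm, dist_eq_norm, norm_sub_rev x y] at hl
    calc _ ≤ ‖g' x - g' y‖ * ‖y - x‖ := real_inner_le_norm _ _
      _ ≤ (L * ‖y - x‖) * ‖y - x‖ := by gcongr
      _ = _ := by ring
  have h7 : inner ℝ (g' x) (z - y) ≥ g z - g y - L * ‖y - x‖ ^ 2 := by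
    simp only [inner_sub_left, inner_sub_right] at h4 h5 h6 ⊢
    linarith
  have h8 := mul_le_mul_of_nonneg_left h7 ht.le
  rw [he2] at h1
  rw [h3]
  linarith

/-- For Algorithm 1 (concave denominator), with nonempty solution set `C` and
`θ̄ = inf_{x∈S} f(x)/g(x) > 0`: `x^k − x^{k−1} → 0` strongly and, for every `x̄ ∈ C`,
the sequence `(‖x̄ − x^k‖)_{k≥1}` converges. -/
theorem algorithm1_increments_tendsto_zero
    {H : Type*} [NormedAddCommGroup H] [InnerProductSpace ℝ H] [CompleteSpace H]
    (S : Set H) (hS_ne : S.Nonempty) (hS_conv : Convex ℝ S) (hS_closed : IsClosed S)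
    -- f : H → ℝ ∪ {+∞} is encoded via its (nonempty) effective domain D and real values f on D
    (f : H → ℝ) (D : Set H) (hf_proper : D.Nonempty)
    (hf_convex : ConvexOn ℝ D f)
    (hf_lsc : LowerSemicontinuous fun z => if z ∈ D then ((f z : ℝ) : EReal) else ⊤)
    (hDS : (D ∩ S).Nonempty)
    (hf_nonneg : ∀ z ∈ S ∩ D, 0 ≤ f z)
    (g : H → ℝ) (g' : H → H)
    (hg_grad : ∀ z, HasGradientAt g (g' z) z)
    (hg_concave : ConcaveOn ℝ Set.univ g)
    (L : ℝ) (hL : 0 < L)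
    (hg_lip : LipschitzWith (Real.toNNReal L) g')
    (M : ℝ) (hM : 0 < M)
    (hg_pos : ∀ z ∈ S, 0 < g z) (hg_le : ∀ z ∈ S, g z ≤ M)
    -- Algorithm 1: sequences x, θ, η (θ_{k+1} = f(x^k)/g(x^k) for k ≥ 0, η_k = 1/(2Lθ_k) for k ≥ 1)
    (x : ℕ → H) (θ η : ℕ → ℝ)
    (hx0 : x 0 ∈ S ∩ D)
    (hθ : ∀ k : ℕ, θ (k + 1) = f (x k) / g (x k))
    (hη : ∀ k : ℕ, η (k + 1) = 1 / (2 * L * θ (k + 1)))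
    -- x^{k+1} is the minimizer over S of y ↦ f(y) + (1/(2η_{k+1}))‖y − (x^k + θ_{k+1}η_{k+1}∇g(x^k))‖²
    (hstep : ∀ k : ℕ, x (k + 1) ∈ S ∩ D ∧ ∀ y ∈ S ∩ D,
      f (x (k + 1)) + 1 / (2 * η (k + 1)) *
          ‖x (k + 1) - (x k + (θ (k + 1) * η (k + 1)) • g' (x k))‖ ^ 2 ≤
        f y + 1 / (2 * η (k + 1)) * ‖y - (x k + (θ (k + 1) * η (k + 1)) • g' (x k))‖ ^ 2)
    -- θ̄ = inf_{z ∈ S} f(z)/g(z) and the solution set C = {z ∈ S : f(z)/g(z) = θ̄} is nonempty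
    (θbar : ℝ) (hθbar : IsGLB ((fun z => f z / g z) '' (S ∩ D)) θbar)
    (hC_ne : ∃ xb ∈ S ∩ D, f xb / g xb = θbar)
    (hθbar_pos : 0 < θbar) :
    Tendsto (fun k : ℕ => x (k + 1) - x k) atTop (𝓝 0) ∧
      ∀ xb, xb ∈ S ∩ D → f xb / g xb = θbar →
        ∃ l : ℝ, Tendsto (fun k : ℕ => ‖xb - x k‖) atTop (𝓝 l) := by

  have hxm : ∀ k, x k ∈ S ∩ D := fun k => by
    cases k with
    | zero => exact hx0
    | succ k => exact (hstep k).1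
  have hθge : ∀ k, θbar ≤ θ (k + 1) := fun k => by
    rw [hθ]; exact hθbar.1 ⟨x k, hxm k, rfl⟩
  have hθpos : ∀ k, 0 < θ (k + 1) := fun k => hθbar_pos.trans_le (hθge k)
  have hfθ : ∀ k, f (x k) = θ (k + 1) * g (x k) := fun k => by
    rw [hθ, div_mul_cancel₀ _ (hg_pos _ (hxm k).1).ne']
  have est : ∀ k, ∀ z ∈ S ∩ D,
      f (x (k + 1)) - θ (k + 1) * g (x (k + 1)) + L * θ (k + 1) * ‖z - x (k + 1)‖ ^ 2 ≤
        f z - θ (k + 1) * g z + L * θ (k + 1) * ‖z - x k‖ ^ 2 := by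
    intro k z hz
    refine step_estimate hS_conv hf_convex hg_grad hg_concave hL hg_lip (hθpos k) (hxm (k + 1)) hz ?_
    have h := (hstep k).2
    have hp := hθpos k
    have e1 : 1 / (2 * η (k + 1)) = L * θ (k + 1) := by
      rw [hη]; field_simp
    have e2 : θ (k + 1) * η (k + 1) = 1 / (2 * L) := by
      rw [hη]; field_simp
    rwa [e1, e2] at h
  have hinc : ∀ k, L * θ (k + 1) * ‖x (k + 1) - x k‖ ^ 2 ≤
      (θ (k + 1) - θ (k + 2)) * g (x (k + 1)) := by
    intro k
    have h := est k (x k) (hxm k)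
    rw [hfθ (k + 1), hfθ k, norm_sub_rev, sub_self, sub_self, norm_zero] at h
    linarith
  have hdec : ∀ k, θ (k + 2) ≤ θ (k + 1) := by
    intro k
    have h1 : 0 ≤ L * θ (k + 1) * ‖x (k + 1) - x k‖ ^ 2 := by
      have := hθpos k
      positivity
    have := nonneg_of_mul_nonneg_left (h1.trans (hinc k)) (hg_pos _ (hxm (k + 1)).1)
    linarith
  have hdM : ∀ k, (θ (k + 1) - θ (k + 2)) * g (x (k + 1)) ≤ (θ (k + 1) - θ (k + 2)) * M :=
    fun k => mul_le_mul_of_nonneg_left (hg_le _ (hxm (k + 1)).1) (sub_nonneg.2 (hdec k))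
  have hθlim : ∃ l, Tendsto (fun k => θ (k + 1)) atTop (𝓝 l) :=
    ⟨_, tendsto_atTop_ciInf (antitone_nat_of_succ_le hdec)
      ⟨θbar, by rintro _ ⟨k, rfl⟩; exact hθge k⟩⟩
  obtain ⟨l, hl⟩ := hθlim
  set c := M / (L * θbar) with hc
  have hcpos : 0 < c := by positivity
  -- Division by `L * θ (k + 1)` costs at most the factor `1 / (L * θbar)`.
  have hdiv : ∀ k, ∀ u : ℝ, L * θ (k + 1) * u ≤ (θ (k + 1) - θ (k + 2)) * M →
      u ≤ c * (θ (k + 1) - θ (k + 2)) := by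
    intro k u hu
    have hd := sub_nonneg.2 (hdec k)
    have hcM : c * (L * θbar) = M := by rw [hc]; field_simp
    have h1 : L * θbar ≤ L * θ (k + 1) := mul_le_mul_of_nonneg_left (hθge k) hL.le
    refine le_of_mul_le_mul_left (hu.trans ?_) (mul_pos hL (hθpos k))
    rw [← hcM]
    have := mul_le_mul_of_nonneg_left h1 (mul_nonneg hcpos.le hd)
    linarith
  constructor
  · rw [tendsto_zero_iff_norm_tendsto_zero]
    have hb : ∀ k, ‖x (k + 1) - x k‖ ^ 2 ≤ c * (θ (k + 1) - θ (k + 2)) :=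
      fun k => hdiv k _ ((hinc k).trans (hdM k))
    have h0 : Tendsto (fun k => c * (θ (k + 1) - θ (k + 2))) atTop (𝓝 0) := by
      simpa using (hl.sub (hl.comp (tendsto_add_atTop_nat 1))).const_mul c
    have h2 := (squeeze_zero (fun k => sq_nonneg _) hb h0).sqrt
    simpa [Real.sqrt_sq] using h2
  · intro xb hxb hval
    have hfb : f xb = θbar * g xb := by
      rw [← hval, div_mul_cancel₀ _ (hg_pos _ hxb.1).ne']
    have hE : ∀ k, ‖xb - x (k + 1)‖ ^ 2 + c * θ (k + 2) ≤ ‖xb - x k‖ ^ 2 + c * θ (k + 1) := by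
      intro k
      have h := est k xb hxb
      rw [hfθ (k + 1), hfb] at h
      have hn := mul_nonneg (sub_nonneg.2 (hθge k)) (hg_pos _ hxb.1).le
      have := hdiv k (‖xb - x (k + 1)‖ ^ 2 - ‖xb - x k‖ ^ 2) (by linarith [hdM k])
      linarith
    have hElim := tendsto_atTop_ciInf (f := fun k => ‖xb - x k‖ ^ 2 + c * θ (k + 1))
      (antitone_nat_of_succ_le hE)
      ⟨0, by
        rintro _ ⟨k, rfl⟩
        have := hθpos k
        positivity⟩
    have h2 := (hElim.sub (hl.const_mul c)).sqrt
    exact ⟨_, by simpa [Real.sqrt_sq] using h2⟩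
end

section
/- In the setting of the convex-denominator fractional program and Algorithm 2, for every k ≥ 1 the inequality 0 ≥ (θ_{k+1} − θ_k) g(x^k) + (1/η_k)‖x^{k−1} − x^k‖² holds. -/
open Filter Topology Classical

/-!
The step defining `x (k + 1)` minimizes a convex function plus a quadratic, so it satisfies the
variational inequality `f p + η⁻¹ ⟪c - p, y - p⟫ ≤ f y` of a proximal point
(`prox_variational_inequality`), here with `p = x (k + 1)` and
`c = x k + (θ (k + 1) * η (k + 1)) • g' (x k)`. Testing it at `y = x k` gives
`f p + η⁻¹ ‖x k - p‖² + θ (k + 1) ⟪g' (x k), x k - p⟫ ≤ f (x k)`. Since `θ (k + 1) ≥ 0`, the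
gradient inequality for the convex function `g` (`ConvexOn.add_inner_gradient_le`) bounds the inner
product below by `g (x k) - g p`, and the claim follows from `f (x k) = θ (k + 1) * g (x k)` and
`f p = θ (k + 2) * g p`.
-/

theorem ConvexOn.add_inner_gradient_le
    {H : Type*} [NormedAddCommGroup H] [InnerProductSpace ℝ H] [CompleteSpace H]
    {g : H → ℝ} (hg : ConvexOn ℝ Set.univ g) {v a : H} (ha : HasGradientAt g v a) (b : H) :
    g a + inner ℝ v (b - a) ≤ g b := by
  have hconv : ConvexOn ℝ Set.univ (g ∘ AffineMap.lineMap (k := ℝ) a b) := by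
    simpa using hg.comp_affineMap (AffineMap.lineMap (k := ℝ) a b)
  have hderiv : HasDerivAt (g ∘ AffineMap.lineMap (k := ℝ) a b) (inner ℝ v (b - a)) 0 := by
    have hF : HasFDerivAt g (InnerProductSpace.toDual ℝ H v)
        (AffineMap.lineMap (k := ℝ) a b (0 : ℝ)) := by
      simpa using ha.hasFDerivAt
    simpa using hF.comp_hasDerivAt (0 : ℝ) AffineMap.hasDerivAt_lineMap
  have h := hconv.le_slope_of_hasDerivAt (Set.mem_univ (0 : ℝ)) (Set.mem_univ (1 : ℝ))
    zero_lt_one hderiv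
  simp [slope_def_field] at h
  linarith

/-- Variational inequality at a proximal point: it is the first-order optimality condition along
the segment from the minimizer `p` to `y`, so no differentiability of `f` is needed. -/
theorem prox_variational_inequality
    {H : Type*} [NormedAddCommGroup H] [InnerProductSpace ℝ H]
    {K : Set H} {f : H → ℝ} (hf : ConvexOn ℝ K f) {η : ℝ} {c p : H} (hp : p ∈ K)
    (hmin : ∀ y ∈ K, f p + 1 / (2 * η) * ‖p - c‖ ^ 2 ≤ f y + 1 / (2 * η) * ‖y - c‖ ^ 2)
    {y : H} (hy : y ∈ K) :
    f p + 1 / η * inner ℝ (c - p) (y - p) ≤ f y := by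
  set A : ℝ := f y - f p - 1 / η * inner ℝ (c - p) (y - p) with hA
  set B : ℝ := 1 / (2 * η) * ‖y - p‖ ^ 2 with hB
  -- Minimality against `p + t • (y - p)`, divided by `t`.
  have key : ∀ t ∈ Set.Ioc (0 : ℝ) 1, 0 ≤ A + t * B := by
    rintro t ⟨ht0, ht1⟩
    have hmem := hf.1 hp hy (sub_nonneg.2 ht1) ht0.le (sub_add_cancel 1 t)
    have hfc := hf.2 hp hy (sub_nonneg.2 ht1) ht0.le (sub_add_cancel 1 t)
    have hm := hmin _ hmem
    have hvec : (1 - t) • p + t • y - c = t • (y - p) - (c - p) := by module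
    have hnorm : ‖(1 - t) • p + t • y - c‖ ^ 2
        = t ^ 2 * ‖y - p‖ ^ 2 - 2 * t * inner ℝ (c - p) (y - p) + ‖p - c‖ ^ 2 := by
      rw [hvec, norm_sub_sq_real, norm_smul, mul_pow, real_inner_smul_left, real_inner_comm,
        norm_sub_rev c p, Real.norm_eq_abs, sq_abs]
      ring
    rw [hnorm] at hm
    simp only [smul_eq_mul] at hfc
    have hhalf : 1 / (2 * η) = 1 / η / 2 := by ring
    have hmul : 0 ≤ t * (A + t * B) := by
      rw [hhalf] at hm
      rw [hA, hB, hhalf]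
      linarith
    exact nonneg_of_mul_nonneg_right hmul ht0
  have hlim : Tendsto (fun t : ℝ => A + t * B) (𝓝[>] 0) (𝓝 A) := by
    have hc : Continuous fun t : ℝ => A + t * B := by fun_prop
    simpa using (hc.tendsto 0).mono_left nhdsWithin_le_nhds
  have hA0 : 0 ≤ A :=
    ge_of_tendsto hlim (Filter.mem_of_superset (Ioc_mem_nhdsGT zero_lt_one) key)
  linarith

/-- Inequality (2.21) for Algorithm 2 (convex denominator): for every `k ≥ 1`,
`0 ≥ (θ_{k+1} − θ_k) g(x^k) + (1/η_k)‖x^{k−1} − x^k‖²` (stated with the shift `k ↦ k+1`). -/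
theorem algorithm2_key_inequality
    {H : Type*} [NormedAddCommGroup H] [InnerProductSpace ℝ H] [CompleteSpace H]
    (S : Set H) (hS_ne : S.Nonempty) (hS_conv : Convex ℝ S) (hS_closed : IsClosed S)
    -- f : H → ℝ ∪ {+∞} is encoded via its (nonempty) effective domain D and real values f on D
    (f : H → ℝ) (D : Set H) (hf_proper : D.Nonempty)
    (hf_convex : ConvexOn ℝ D f)
    (hf_lsc : LowerSemicontinuous fun z => if z ∈ D then ((f z : ℝ) : EReal) else ⊤)
    (hDS : (D ∩ S).Nonempty)
    (hf_nonneg : ∀ z ∈ S ∩ D, 0 ≤ f z)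
    (g : H → ℝ) (g' : H → H)
    (hg_grad : ∀ z, HasGradientAt g (g' z) z)
    (hg'_cont : Continuous g')
    (hg_convex : ConvexOn ℝ Set.univ g)
    (M : ℝ) (hM : 0 < M)
    (hg_pos : ∀ z ∈ S, 0 < g z) (hg_le : ∀ z ∈ S, g z ≤ M)
    -- Algorithm 2: sequences x, θ and chosen step sizes η_k > 0
    (x : ℕ → H) (θ η : ℕ → ℝ)
    (hx0 : x 0 ∈ S ∩ D)
    (hθ : ∀ k : ℕ, θ (k + 1) = f (x k) / g (x k))
    (hη_pos : ∀ k : ℕ, 0 < η (k + 1))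
    -- x^{k+1} is the minimizer over S of y ↦ f(y) + (1/(2η_{k+1}))‖y − (x^k + θ_{k+1}η_{k+1}∇g(x^k))‖²
    (hstep : ∀ k : ℕ, x (k + 1) ∈ S ∩ D ∧ ∀ y ∈ S ∩ D,
      f (x (k + 1)) + 1 / (2 * η (k + 1)) *
          ‖x (k + 1) - (x k + (θ (k + 1) * η (k + 1)) • g' (x k))‖ ^ 2 ≤
        f y + 1 / (2 * η (k + 1)) * ‖y - (x k + (θ (k + 1) * η (k + 1)) • g' (x k))‖ ^ 2)
    :
    ∀ k : ℕ,
      0 ≥ (θ (k + 2) - θ (k + 1)) * g (x (k + 1)) +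
          1 / η (k + 1) * ‖x k - x (k + 1)‖ ^ 2 := by
  intro k
  have hxk : ∀ j, x j ∈ S ∩ D := by
    intro j
    cases j with
    | zero => exact hx0
    | succ j => exact (hstep j).1
  have hfθ : ∀ j, θ (j + 1) * g (x j) = f (x j) := fun j => by
    rw [hθ j, div_mul_cancel₀ _ (hg_pos _ (hxk j).1).ne']
  have hθ0 : 0 ≤ θ (k + 1) := by
    rw [hθ k]
    exact div_nonneg (hf_nonneg _ (hxk k)) (hg_pos _ (hxk k).1).le
  have hprox := prox_variational_inequality
    (hf_convex.subset Set.inter_subset_right (hS_conv.inter hf_convex.1))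
    (hstep k).1 (hstep k).2 (hxk k)
  have hgrad := mul_le_mul_of_nonneg_left
    (hg_convex.add_inner_gradient_le (hg_grad (x k)) (x (k + 1))) hθ0
  have hinner : 1 / η (k + 1) *
      inner ℝ (x k + (θ (k + 1) * η (k + 1)) • g' (x k) - x (k + 1)) (x k - x (k + 1))
      = 1 / η (k + 1) * ‖x k - x (k + 1)‖ ^ 2
        - θ (k + 1) * inner ℝ (g' (x k)) (x (k + 1) - x k) := by
    have hη := (hη_pos k).ne'
    rw [add_sub_right_comm, inner_add_left, real_inner_smul_left, real_inner_self_eq_norm_sq,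
      ← neg_sub (x k) (x (k + 1)), inner_neg_right]
    field_simp
    ring
  rw [hinner] at hprox
  linarith [hfθ k, hfθ (k + 1)]
end

section
/- In the setting of the convex-denominator fractional program and Algorithm 2, with step sizes satisfying liminf_{k→∞} η_k > 0, the sequence (θ_k)_{k≥1} is nonincreasing (hence convergent) and ∑_{k≥1} (1/η_k)‖x^k − x^{k−1}‖² < +∞. -/
open Filter Topology Classical
open scoped RealInnerProductSpace

/-!
Comparing the minimizer `x (k + 1)` with the competitor `x k` and expanding the squares gives
`f (x (k + 1)) + ‖x (k + 1) - x k‖² / (2 η) ≤ f (x k) + θ ⟪g' (x k), x (k + 1) - x k⟫`.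
Since `f (x k) = θ g (x k)` and `θ ≥ 0`, the gradient inequality `gradient_ineq` for the convex `g`
bounds the right-hand side by `θ g (x (k + 1))`. Dividing by `g (x (k + 1)) ∈ (0, M]` shows that `θ`
decreases, with `‖x (k + 1) - x k‖² / η ≤ 2 M (θ (k + 1) - θ (k + 2))`. As `θ ≥ 0`, the sequence
converges and the right-hand sides telescope to a bounded sum.
-/

theorem gradient_ineq {H : Type*} [NormedAddCommGroup H] [InnerProductSpace ℝ H] [CompleteSpace H]
    {g : H → ℝ} {v q : H} (hg : HasGradientAt g v q) (hc : ConvexOn ℝ Set.univ g) (p : H) :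
    g q + ⟪v, p - q⟫ ≤ g p := by
  -- The one-variable tangent inequality applies to `g` restricted to the line through `q` and `p`.
  have hc' : ConvexOn ℝ Set.univ (g ∘ AffineMap.lineMap (k := ℝ) q p) := by
    simpa using hc.comp_affineMap (AffineMap.lineMap (k := ℝ) q p)
  have hd : HasDerivAt (g ∘ AffineMap.lineMap (k := ℝ) q p) ⟪v, p - q⟫ 0 := by
    have h1 : HasFDerivAt g (InnerProductSpace.toDual ℝ H v)
        (AffineMap.lineMap (k := ℝ) q p 0) := by
      simpa using hg.hasFDerivAt
    simpa using h1.comp_hasDerivAt (0 : ℝ) AffineMap.hasDerivAt_lineMap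
  have h := hc'.le_slope_of_hasDerivAt (Set.mem_univ 0) (Set.mem_univ 1) one_pos hd
  simp [slope_def_field] at h
  linarith

/-- If the proximal objective centred at `q + (t * e) • v` is no larger at `p` than at `q`, where `f`
takes the values `a` and `b`, then the terms `‖(t * e) • v‖ ^ 2` cancel on expanding the squares. -/
theorem prox_descent {H : Type*} [NormedAddCommGroup H] [InnerProductSpace ℝ H]
    {a b t e : ℝ} {p q v : H} (he : 0 < e)
    (h : a + 1 / (2 * e) * ‖p - (q + (t * e) • v)‖ ^ 2 ≤
      b + 1 / (2 * e) * ‖q - (q + (t * e) • v)‖ ^ 2) :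
    a + 1 / (2 * e) * ‖p - q‖ ^ 2 ≤ b + t * ⟪v, p - q⟫ := by
  have h1 : p - (q + (t * e) • v) = (p - q) - (t * e) • v := by abel
  have h2 : q - (q + (t * e) • v) = -((t * e) • v) := by abel
  rw [h1, h2, norm_neg, norm_sub_sq_real, real_inner_smul_right, real_inner_comm] at h
  have h3 : 1 / (2 * e) * (2 * (t * e * ⟪v, p - q⟫)) = t * ⟪v, p - q⟫ := by
    field_simp
  linarith

/-- Theorem 9 (i): for Algorithm 2 (convex denominator) with `liminf η_k > 0`, the sequence
`(θ_k)_{k≥1}` is nonincreasing (hence convergent) and `∑_{k≥1} (1/η_k)‖x^k − x^{k−1}‖² < ∞`. -/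
theorem algorithm2_theta_monotone_and_summable
    {H : Type*} [NormedAddCommGroup H] [InnerProductSpace ℝ H] [CompleteSpace H]
    (S : Set H) (hS_ne : S.Nonempty) (hS_conv : Convex ℝ S) (hS_closed : IsClosed S)
    -- f : H → ℝ ∪ {+∞} is encoded via its (nonempty) effective domain D and real values f on D
    (f : H → ℝ) (D : Set H) (hf_proper : D.Nonempty)
    (hf_convex : ConvexOn ℝ D f)
    (hf_lsc : LowerSemicontinuous fun z => if z ∈ D then ((f z : ℝ) : EReal) else ⊤)
    (hDS : (D ∩ S).Nonempty)
    (hf_nonneg : ∀ z ∈ S ∩ D, 0 ≤ f z)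
    (g : H → ℝ) (g' : H → H)
    (hg_grad : ∀ z, HasGradientAt g (g' z) z)
    (hg'_cont : Continuous g')
    (hg_convex : ConvexOn ℝ Set.univ g)
    (M : ℝ) (hM : 0 < M)
    (hg_pos : ∀ z ∈ S, 0 < g z) (hg_le : ∀ z ∈ S, g z ≤ M)
    -- Algorithm 2: sequences x, θ and chosen step sizes η_k > 0
    (x : ℕ → H) (θ η : ℕ → ℝ)
    (hx0 : x 0 ∈ S ∩ D)
    (hθ : ∀ k : ℕ, θ (k + 1) = f (x k) / g (x k))
    (hη_pos : ∀ k : ℕ, 0 < η (k + 1))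
    -- x^{k+1} is the minimizer over S of y ↦ f(y) + (1/(2η_{k+1}))‖y − (x^k + θ_{k+1}η_{k+1}∇g(x^k))‖²
    (hstep : ∀ k : ℕ, x (k + 1) ∈ S ∩ D ∧ ∀ y ∈ S ∩ D,
      f (x (k + 1)) + 1 / (2 * η (k + 1)) *
          ‖x (k + 1) - (x k + (θ (k + 1) * η (k + 1)) • g' (x k))‖ ^ 2 ≤
        f y + 1 / (2 * η (k + 1)) * ‖y - (x k + (θ (k + 1) * η (k + 1)) • g' (x k))‖ ^ 2)
    -- liminf_{k→∞} η_k > 0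
    (hη_liminf : ∃ c : ℝ, 0 < c ∧ ∀ᶠ k in atTop, c ≤ η k)
    :
    (∀ k : ℕ, θ (k + 2) ≤ θ (k + 1)) ∧
      (∃ t : ℝ, Tendsto (fun k : ℕ => θ (k + 1)) atTop (𝓝 t)) ∧
      Summable (fun k : ℕ => 1 / η (k + 1) * ‖x (k + 1) - x k‖ ^ 2) := by
  have hmem : ∀ k, x k ∈ S ∩ D := by
    intro k
    cases k with
    | zero => exact hx0
    | succ k => exact (hstep k).1
  have hθ_nonneg : ∀ k, 0 ≤ θ (k + 1) := fun k => by
    rw [hθ]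
    exact div_nonneg (hf_nonneg _ (hmem k)) (hg_pos _ (hmem k).1).le
  have hfθ : ∀ k, f (x k) = θ (k + 1) * g (x k) := fun k => by
    rw [hθ, div_mul_cancel₀ _ (hg_pos _ (hmem k).1).ne']
  have hkey : ∀ k, 1 / (2 * η (k + 1)) * ‖x (k + 1) - x k‖ ^ 2 ≤
      (θ (k + 1) - θ (k + 2)) * g (x (k + 1)) := fun k => by
    have h1 := prox_descent (hη_pos k) ((hstep k).2 _ (hmem k))
    have h2 := mul_le_mul_of_nonneg_left
      (gradient_ineq (hg_grad (x k)) hg_convex (x (k + 1))) (hθ_nonneg k)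
    have h3 := hfθ k
    have h4 : f (x (k + 1)) = θ (k + 2) * g (x (k + 1)) := hfθ (k + 1)
    linarith
  have hmono : ∀ k, θ (k + 2) ≤ θ (k + 1) := fun k => by
    have h0 : 0 ≤ 1 / (2 * η (k + 1)) * ‖x (k + 1) - x k‖ ^ 2 :=
      mul_nonneg (one_div_nonneg.2 (by linarith [hη_pos k])) (sq_nonneg _)
    exact sub_nonneg.1 (nonneg_of_mul_nonneg_left (h0.trans (hkey k)) (hg_pos _ (hmem (k + 1)).1))
  refine ⟨hmono, ⟨_, tendsto_atTop_ciInf (antitone_nat_of_succ_le hmono)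
    ⟨0, Set.forall_mem_range.2 hθ_nonneg⟩⟩, ?_⟩
  have hbound : ∀ k, 1 / η (k + 1) * ‖x (k + 1) - x k‖ ^ 2 ≤
      2 * M * (θ (k + 1) - θ (k + 2)) := fun k => by
    have h1 := mul_le_mul_of_nonneg_left (hg_le _ (hmem (k + 1)).1) (sub_nonneg.2 (hmono k))
    have h2 : 1 / η (k + 1) * ‖x (k + 1) - x k‖ ^ 2 =
        2 * (1 / (2 * η (k + 1)) * ‖x (k + 1) - x k‖ ^ 2) := by
      have := (hη_pos k).ne'
      field_simp
    linarith [hkey k]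
  refine summable_of_sum_range_le (c := 2 * M * θ 1)
    (fun k => mul_nonneg (one_div_nonneg.2 (hη_pos k).le) (sq_nonneg _)) fun n => ?_
  calc ∑ k ∈ Finset.range n, 1 / η (k + 1) * ‖x (k + 1) - x k‖ ^ 2
      ≤ ∑ k ∈ Finset.range n, 2 * M * (θ (k + 1) - θ (k + 2)) :=
        Finset.sum_le_sum fun k _ => hbound k
    _ = 2 * M * (θ 1 - θ (n + 1)) := by
        rw [← Finset.mul_sum, Finset.sum_range_sub' (fun k => θ (k + 1))]
    _ ≤ 2 * M * θ 1 :=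
        mul_le_mul_of_nonneg_left (by linarith [hθ_nonneg n]) (by positivity)
end

section
/- In the setting of the convex-denominator fractional program and Algorithm 2, if the function (f + δ_S)/g is coercive, i.e. (f(u) + δ_S(u))/g(u) → +∞ as ‖u‖ → +∞, then the sequence (x^k)_{k≥0} generated by Algorithm 2 is bounded. -/
open Filter Topology Classical

/-!
The objective values `f (x k) / g (x k)` never increase. Comparing the minimizer `x (k + 1)` with
the competitor `y = x k` and expanding the squares, the quadratic terms `‖θ η ∇g‖²` cancel and
`f (x (k + 1)) ≤ f (x k) + θ ⟪∇g (x k), x (k + 1) - x k⟫` remains, with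
`θ = f (x k) / g (x k) ≥ 0`. Since `f (x k) = θ g (x k)`, the gradient inequality for the convex
function `g` (`add_inner_le_of_convexOn`) bounds the right-hand side by `θ g (x (k + 1))`; dividing
by `g (x (k + 1)) > 0` gives the claim. The whole sequence therefore lies in one sublevel set of
the objective, which is bounded by coercivity.
-/

/-- The gradient inequality for a convex function, obtained by restricting it to a line. -/
lemma add_inner_le_of_convexOn {H : Type*} [NormedAddCommGroup H] [InnerProductSpace ℝ H]
    [CompleteSpace H] {g : H → ℝ} (hg : ConvexOn ℝ Set.univ g) {a v : H}
    (hv : HasGradientAt g v a) (b : H) : g a + inner ℝ v (b - a) ≤ g b := by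
  have hline : ConvexOn ℝ Set.univ (fun t : ℝ => g (AffineMap.lineMap a b t)) := by
    simpa [Function.comp_def] using hg.comp_affineMap (AffineMap.lineMap a b : ℝ →ᵃ[ℝ] H)
  have hderiv : HasDerivAt (fun t : ℝ => g (AffineMap.lineMap a b t)) (inner ℝ v (b - a)) 0 := by
    have h1 : HasFDerivAt g (InnerProductSpace.toDual ℝ H v)
        (AffineMap.lineMap a b (0 : ℝ)) := by
      simpa using hv.hasFDerivAt
    have h2 : HasDerivAt (fun t : ℝ => (AffineMap.lineMap a b t : H)) (b - a) 0 :=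
      AffineMap.hasDerivAt_lineMap
    simpa [Function.comp_def] using h1.comp_hasDerivAt (0 : ℝ) h2
  have h := hline.le_slope_of_hasDerivAt (Set.mem_univ 0) (Set.mem_univ 1) one_pos hderiv
  simp [slope_def_field] at h
  linarith

/-- If the objective `(f + δ_S)/g` is coercive, then the sequence generated by Algorithm 2
(convex denominator) is bounded. Coercivity: `f(u)/g(u) → +∞` as `‖u‖ → ∞` with `u ∈ S ∩ dom f`
(off `S ∩ dom f` the extended objective equals `+∞`). -/
theorem algorithm2_bounded_of_coercive
    {H : Type*} [NormedAddCommGroup H] [InnerProductSpace ℝ H] [CompleteSpace H]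
    (S : Set H) (hS_ne : S.Nonempty) (hS_conv : Convex ℝ S) (hS_closed : IsClosed S)
    -- f : H → ℝ ∪ {+∞} is encoded via its (nonempty) effective domain D and real values f on D
    (f : H → ℝ) (D : Set H) (hf_proper : D.Nonempty)
    (hf_convex : ConvexOn ℝ D f)
    (hf_lsc : LowerSemicontinuous fun z => if z ∈ D then ((f z : ℝ) : EReal) else ⊤)
    (hDS : (D ∩ S).Nonempty)
    (hf_nonneg : ∀ z ∈ S ∩ D, 0 ≤ f z)
    (g : H → ℝ) (g' : H → H)
    (hg_grad : ∀ z, HasGradientAt g (g' z) z)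
    (hg'_cont : Continuous g')
    (hg_convex : ConvexOn ℝ Set.univ g)
    (M : ℝ) (hM : 0 < M)
    (hg_pos : ∀ z ∈ S, 0 < g z) (hg_le : ∀ z ∈ S, g z ≤ M)
    -- Algorithm 2: sequences x, θ and chosen step sizes η_k > 0
    (x : ℕ → H) (θ η : ℕ → ℝ)
    (hx0 : x 0 ∈ S ∩ D)
    (hθ : ∀ k : ℕ, θ (k + 1) = f (x k) / g (x k))
    (hη_pos : ∀ k : ℕ, 0 < η (k + 1))
    -- x^{k+1} is the minimizer over S of y ↦ f(y) + (1/(2η_{k+1}))‖y − (x^k + θ_{k+1}η_{k+1}∇g(x^k))‖²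
    (hstep : ∀ k : ℕ, x (k + 1) ∈ S ∩ D ∧ ∀ y ∈ S ∩ D,
      f (x (k + 1)) + 1 / (2 * η (k + 1)) *
          ‖x (k + 1) - (x k + (θ (k + 1) * η (k + 1)) • g' (x k))‖ ^ 2 ≤
        f y + 1 / (2 * η (k + 1)) * ‖y - (x k + (θ (k + 1) * η (k + 1)) • g' (x k))‖ ^ 2)
    (hcoercive : ∀ r : ℝ, ∃ R : ℝ, ∀ u : H, R ≤ ‖u‖ → u ∈ S ∩ D → r ≤ f u / g u) :
    ∃ R : ℝ, ∀ k : ℕ, ‖x k‖ ≤ R := by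
  have hx : ∀ k, x k ∈ S ∩ D := by
    rintro (_ | k)
    exacts [hx0, (hstep k).1]
  have hmono : ∀ k, f (x (k + 1)) / g (x (k + 1)) ≤ f (x k) / g (x k) := by
    intro k
    have hgk := hg_pos _ (hx k).1
    have hθ_nonneg : 0 ≤ θ (k + 1) := by
      rw [hθ]
      exact div_nonneg (hf_nonneg _ (hx k)) hgk.le
    have hf_eq : f (x k) = θ (k + 1) * g (x k) := by
      rw [hθ]
      field_simp
    have hη := hη_pos k
    have hmin := (hstep k).2 (x k) (hx k)
    have hgrad := add_inner_le_of_convexOn hg_convex (hg_grad (x k)) (x (k + 1))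
    rw [← hθ k, div_le_iff₀ (hg_pos _ (hx (k + 1)).1)]
    rw [← sub_sub, norm_sub_sq_real (x (k + 1) - x k), sub_add_cancel_left, norm_neg,
      inner_smul_right, real_inner_comm] at hmin
    -- the cross term carries a factor `η`, which the weight `1 / (2 η)` cancels
    have hcross : 1 / (2 * η (k + 1)) * (2 * (θ (k + 1) * η (k + 1) *
        inner ℝ (g' (x k)) (x (k + 1) - x k))) =
          θ (k + 1) * inner ℝ (g' (x k)) (x (k + 1) - x k) := by
      field_simp
    have hsq : 0 ≤ 1 / (2 * η (k + 1)) * ‖x (k + 1) - x k‖ ^ 2 := by positivity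
    have hscaled := mul_le_mul_of_nonneg_left hgrad hθ_nonneg
    linarith
  have hanti : ∀ k, f (x k) / g (x k) ≤ f (x 0) / g (x 0) := fun k =>
    antitone_nat_of_succ_le (f := fun k => f (x k) / g (x k)) hmono (Nat.zero_le k)
  obtain ⟨R, hR⟩ := hcoercive (f (x 0) / g (x 0) + 1)
  refine ⟨R, fun k => ?_⟩
  by_contra! hk
  linarith [hR (x k) hk.le (hx k), hanti k]
end

section
/- (Dinkelbach equivalence, forward direction) Let S be a nonempty set, f : S → ℝ nonnegative on S, g : S → ℝ positive on S, and θ̄ := inf_{x∈S} f(x)/g(x). If x̄ ∈ S is an optimal solution of the fractional program inf_{x∈S} f(x)/g(x), i.e. f(x̄)/g(x̄) = θ̄, then x̄ is an optimal solution of the parametric problem inf_{x∈S} (f(x) − θ̄ g(x)) and the optimal value of this parametric problem equals zero. -/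
open Filter Topology Classical

/-- Dinkelbach equivalence, forward direction: if `x̄ ∈ S` attains
`θ̄ = inf_{x∈S} f(x)/g(x)`, then `x̄` minimizes `x ↦ f(x) − θ̄ g(x)` over `S` and the optimal
value of this parametric problem is zero. -/
theorem dinkelbach_forward
    {α : Type*} (S : Set α) (hS : S.Nonempty) (f g : α → ℝ)
    (hf : ∀ x ∈ S, 0 ≤ f x) (hg : ∀ x ∈ S, 0 < g x)
    (θbar : ℝ) (hθbar : IsGLB ((fun x => f x / g x) '' S) θbar)
    (xbar : α) (hxbar : xbar ∈ S) (hopt : f xbar / g xbar = θbar) :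
    (∀ x ∈ S, f xbar - θbar * g xbar ≤ f x - θbar * g x) ∧
      f xbar - θbar * g xbar = 0 := by
  have h0 : f xbar - θbar * g xbar = 0 :=
    sub_eq_zero.mpr ((div_eq_iff (hg xbar hxbar).ne').mp hopt)
  refine ⟨fun x hx => ?_, h0⟩
  rw [h0]
  exact sub_nonneg.mpr ((le_div_iff₀ (hg x hx)).mp (hθbar.1 ⟨x, hx, rfl⟩))
end
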